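/- (Local sector bound for tanh.) Let μ̄ > 0 and let α := tanh(μ̄)/μ̄. Then for every real v with |v| ≤ μ̄, one has α v² ≤ v · tanh(v) ≤ v². That is, tanh lies in the local sector [tanh(μ̄)/μ̄, 1] on the interval [−μ̄, μ̄]. -/

import Mathlib

/-!
For an odd function the sector condition only constrains `φ t / t`, the slope of the chord from the
origin, for `t > 0`. If `φ` is concave on `[0, r]`, this slope decreases from `φ'(0)` to `φ r / r`,
so these two numbers are the sector bounds. The derivative `1 / cosh²` of `tanh` is decreasing on
`[0, ∞)` and equals `1` at the origin.
-/

open Set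

/-- The scalar nonlinearity `φ` lies in the sector `[α, β]` on the interval `[-r, r]`, the notion
used in local absolute stability analysis. -/
def InLocalSector (φ : ℝ → ℝ) (α β r : ℝ) : Prop :=
  ∀ t, |t| ≤ r → α * t ^ 2 ≤ t * φ t ∧ t * φ t ≤ β * t ^ 2

section Sector

variable {φ : ℝ → ℝ} {α β r : ℝ}

theorem inLocalSector_of_odd_of_div_mem_Icc (hodd : φ.Odd)
    (hslope : ∀ t ∈ Ioc 0 r, φ t / t ∈ Icc α β) : InLocalSector φ α β r := by
  have of_pos : ∀ t ∈ Ioc 0 r, α * t ^ 2 ≤ t * φ t ∧ t * φ t ≤ β * t ^ 2 := by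
    intro t ht
    have hchord : t * φ t = φ t / t * t ^ 2 := by
      have := ht.1.ne'
      field_simp
    rw [hchord]
    exact ⟨by gcongr; exact (hslope t ht).1, by gcongr; exact (hslope t ht).2⟩
  intro t ht
  rcases lt_trichotomy t 0 with hneg | rfl | hpos
  · simpa only [hodd.eq, neg_sq, neg_mul_neg] using
      of_pos (-t) ⟨neg_pos.2 hneg, (neg_le_abs t).trans ht⟩
  · simp
  · exact of_pos t ⟨hpos, (le_abs_self t).trans ht⟩

theorem inLocalSector_of_odd_of_concaveOn (hodd : φ.Odd) (hconc : ConcaveOn ℝ (Icc 0 r) φ)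
    (hderiv : HasDerivWithinAt φ β (Ioi 0) 0) : InLocalSector φ (φ r / r) β r := by
  refine inLocalSector_of_odd_of_div_mem_Icc hodd fun t ht ↦ ?_
  have hr : 0 < r := ht.1.trans_le ht.2
  have h0 : (0 : ℝ) ∈ Icc 0 r := left_mem_Icc.2 hr.le
  have htr : t ∈ Icc 0 r := Ioc_subset_Icc_self ht
  have hchord : ∀ s, slope φ 0 s = φ s / s := fun s ↦ by
    rw [slope_def_field, hodd.map_zero, sub_zero, sub_zero]
  rw [← hchord, ← hchord]
  exact ⟨hconc.antitoneOn_slope_gt h0 ⟨htr, ht.1⟩ ⟨right_mem_Icc.2 hr.le, hr⟩ ht.2,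
    hconc.slope_le_of_hasDerivWithinAt_Ioi h0 htr ht.1 hderiv⟩

end Sector

theorem hasDerivAt_tanh (x : ℝ) : HasDerivAt Real.tanh (1 / Real.cosh x ^ 2) x := by
  have hquot := (Real.hasDerivAt_sinh x).fun_div (Real.hasDerivAt_cosh x) (Real.cosh_pos x).ne'
  simp only [← Real.tanh_eq_sinh_div_cosh, ← sq, Real.cosh_sq_sub_sinh_sq] at hquot
  exact hquot

theorem concaveOn_tanh : ConcaveOn ℝ (Ici 0) Real.tanh := by
  have hdiff : Differentiable ℝ Real.tanh := fun x ↦ (hasDerivAt_tanh x).differentiableAt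
  refine AntitoneOn.concaveOn_of_deriv (convex_Ici 0) hdiff.continuous.continuousOn
    hdiff.differentiableOn ?_
  rw [interior_Ici]
  intro x (hx : 0 < x) y (hy : 0 < y) hxy
  have hcosh : Real.cosh x ≤ Real.cosh y :=
    Real.cosh_le_cosh.2 (by rwa [abs_of_pos hx, abs_of_pos hy])
  rw [(hasDerivAt_tanh x).deriv, (hasDerivAt_tanh y).deriv]
  have := Real.cosh_pos x
  gcongr

theorem inLocalSector_tanh (r : ℝ) : InLocalSector Real.tanh (Real.tanh r / r) 1 r := by
  have hderiv : HasDerivAt Real.tanh 1 0 := by simpa using hasDerivAt_tanh 0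
  exact inLocalSector_of_odd_of_concaveOn Real.tanh_neg
    (concaveOn_tanh.subset Icc_subset_Ici_self (convex_Icc 0 r)) hderiv.hasDerivWithinAt

/-- **Local sector bound for tanh:** tanh lies in the sector `[tanh μ̄ / μ̄, 1]` on
    the interval `[−μ̄, μ̄]`. -/
theorem tanh_local_sector (μ : ℝ) (hμ : 0 < μ) (v : ℝ) (hv : |v| ≤ μ) :
    (Real.tanh μ / μ) * v ^ 2 ≤ v * Real.tanh v ∧ v * Real.tanh v ≤ v ^ 2 := by
  simpa only [one_mul] using inLocalSector_tanh μ v hv
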